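/- arXiv:math/9505203 — 9 statements merged into one kernel-verified Lean document; each statement's English description precedes it below -/
import Mathlib

section
/- Assume CH holds (2^ω = ω₁) and f is a Δ-function on ω₂. Let {c_α : α < ω₂} be pairwise disjoint finite subsets of ω₂ and let B be a countable subset of ω₂. Then for each natural number n there exist distinct ordinals α₀, α₁, …, α_{n-1} < ω₂ such that B ⊆ f{ξ,η} for every ξ ∈ c_{α_i} and η ∈ c_{α_j} with i < j < n. -/
noncomputable section

/-- The second uncountable cardinal ω₂, as an ordinal. -/
def omega2 : Ordinal := (Cardinal.aleph 2).ord

/-- Two finite subsets `x` and `y` of ω₂ are good for `f`. -/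
def GoodFor (f : Ordinal → Ordinal → Set Ordinal) (x y : Finset Ordinal) : Prop :=
  ∀ α ∈ x ∩ y, ∀ β ∈ x \ y, ∀ γ ∈ y \ x,
    ((α < β ∧ α < γ) → α ∈ f β γ) ∧
    (α < β → f α γ ⊆ f β γ) ∧
    (α < γ → f α β ⊆ f γ β)

/-- `f` is a Δ-function: every uncountable family of finite subsets of ω₂
contains two sets which are good for `f`. -/
def IsDeltaFunction (f : Ordinal → Ordinal → Set Ordinal) : Prop :=
  ∀ F : Set (Finset Ordinal), (∀ x ∈ F, ∀ ξ ∈ x, ξ < omega2) → ¬ F.Countable →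
    ∃ x ∈ F, ∃ y ∈ F, x ≠ y ∧ GoodFor f x y

open Cardinal Set

universe u v

/-- A set of size at most the continuum, closed under realising countable types of the colouring
`g`, inside any nonempty type. -/
theorem exists_countably_closed_set {S : Type u} [Nonempty S] (g : S → S → ℕ) :
    ∃ M : Set S, #M ≤ 𝔠 ∧ ∀ A ⊆ M, A.Countable → ∀ x ∉ A,
      ∃ y ∈ M, y ∉ A ∧ ∀ a ∈ A, g a y = g a x := by
  classical
  let β : Option (ℕ → ℕ) → Type := fun o => o.elim Empty fun _ => ℕ
  let realise : (ℕ → ℕ) → (ℕ → S) → S := fun h s =>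
    Classical.epsilon fun y => y ∉ range s ∧ ∀ n, g (s n) y = h n
  let step : (Σ o, β o → S) → S := fun p =>
    match p with
    | ⟨none, _⟩ => Classical.arbitrary S
    | ⟨some h, s⟩ => realise h s
  let interp : WType β → S := WType.elim S step
  have hne : (range interp).Nonempty := ⟨_, WType.mk none Empty.elim, rfl⟩
  refine ⟨range interp, ?_, ?_⟩
  · have hW : #(WType β) ≤ 𝔠 := by
      apply WType.cardinalMk_le_of_le'
      have hterm (o : Option (ℕ → ℕ)) : 𝔠 ^ lift.{0} #(β o) ≤ 𝔠 := by
        rcases o with _ | h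
        · simp [β, Cardinal.one_le_iff_ne_zero, continuum_ne_zero]
        · simp [β]
      refine (Cardinal.sum_le_sum _ (fun _ => 𝔠) hterm).trans ?_
      simp only [sum_const', mk_option, mk_pi, mk_nat, prod_const', aleph0_power_aleph0]
      rw [add_one_eq aleph0_le_continuum, continuum_mul_self]
    have := mk_range_le_lift (f := interp)
    rw [lift_id'.{0, u}] at this
    exact this.trans (by simpa using hW)
  · intro A hAM hA x hx
    rcases A.eq_empty_or_nonempty with rfl | hAne
    · obtain ⟨y, hy⟩ := hne
      exact ⟨y, hy, by simp⟩
    obtain ⟨s, rfl⟩ := hA.exists_eq_range hAne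
    choose t ht using fun n => hAM (mem_range_self n)
    have hy := Classical.epsilon_spec
      (p := fun y => y ∉ range s ∧ ∀ n, g (s n) y = g (s n) x) ⟨x, hx, fun _ => rfl⟩
    refine ⟨realise (fun n => g (s n) x) s, ⟨WType.mk (some fun n => g (s n) x) t, ?_⟩, hy.1, ?_⟩
    · change realise _ (fun n => interp (t n)) = _
      simp only [ht]
    · rintro _ ⟨n, rfl⟩
      exact hy.2 n

/-- The Erdős–Rado theorem `(2 ^ ℵ₀)⁺ → (ℵ₁)²_ℵ₀`. -/
theorem exists_uncountable_homogeneous {S : Type u} (hS : 𝔠 < #S) (g : S → S → ℕ)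
    (hg : ∀ x y, g x y = g y x) :
    ∃ H : Set S, ¬ H.Countable ∧ ∃ k, H.Pairwise fun x y => g x y = k := by
  classical
  have : Nonempty S := mk_ne_zero_iff.1 (ne_bot_of_gt hS)
  obtain ⟨M, hM, hclosed⟩ := exists_countably_closed_set g
  obtain ⟨x, hx⟩ : ∃ x, x ∉ M := by
    by_contra! h
    rw [eq_univ_of_forall h, mk_univ] at hM
    exact hM.not_gt hS
  have hext (A : Set S) : ∃ y, A ⊆ M → A.Countable → y ∈ M ∧ y ∉ A ∧ ∀ a ∈ A, g a y = g a x := by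
    by_cases hA : A ⊆ M ∧ A.Countable
    · obtain ⟨y, hy⟩ := hclosed A hA.1 hA.2 x fun h => hx (hA.1 h)
      exact ⟨y, fun _ _ => hy⟩
    · exact ⟨x, fun h₁ h₂ => (hA ⟨h₁, h₂⟩).elim⟩
  choose next hnext using hext
  let I : Type := (aleph 1).ord.ToType
  have hI : Uncountable I := by
    rw [← aleph0_lt_mk_iff]
    simp [I]
  have hIio (i : I) : Countable (Iio i) := by
    rw [← mk_le_aleph0_iff, ← Order.lt_succ_iff, succ_aleph0]
    simpa [I] using mk_Iio_lt i (by simp [I])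
  let a : I → S := wellFounded_lt.fix fun i prev => next (range fun j : Iio i => prev j j.2)
  have ha (i : I) : a i = next (range fun j : Iio i => a j) := wellFounded_lt.fix_eq _ i
  have haM (i : I) : a i ∈ M := by
    induction i using WellFoundedLT.induction with
    | ind i ih =>
      rw [ha]
      exact (hnext _ (by rintro _ ⟨j, rfl⟩; exact ih j j.2) (countable_range _)).1
  have hspec (i : I) := hnext (range fun j : Iio i => a j)
    (by rintro _ ⟨j, rfl⟩; exact haM j) (countable_range _)
  simp only [← ha] at hspec
  have hlt {j i : I} (h : j < i) : a j ≠ a i ∧ g (a j) (a i) = g (a j) x :=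
    ⟨fun he => (hspec i).2.1 ⟨⟨j, h⟩, he⟩, (hspec i).2.2 _ ⟨⟨j, h⟩, rfl⟩⟩
  have hinj : Function.Injective a := fun i j hij => by
    rcases lt_trichotomy i j with h | h | h
    · exact ((hlt h).1 hij).elim
    · exact h
    · exact ((hlt h).1 hij.symm).elim
  obtain ⟨k, hk⟩ : ∃ k, ¬ {i | g (a i) x = k}.Countable := by
    by_contra! h
    apply not_countable_univ (α := I)
    rw [show (univ : Set I) = ⋃ k, {i | g (a i) x = k} by ext; simp]
    exact countable_iUnion h
  refine ⟨a '' {i | g (a i) x = k}, fun h => hk (countable_of_injective_of_countable_image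
    hinj.injOn h), k, ?_⟩
  rintro _ ⟨i, hi, rfl⟩ _ ⟨j, hj, rfl⟩ hne
  rcases lt_trichotomy i j with h | rfl | h
  · exact (hlt h).2.trans hi
  · exact (hne rfl).elim
  · exact (hg _ _).trans ((hlt h).2.trans hj)

/-- All but at most `ℵ₁` members of a disjoint family of sets indexed by `ω₂` lie above a given
countable subset of `ω₂`. -/
theorem aleph_one_lt_mk_above (c : Ordinal.{v} → Finset Ordinal.{u})
    (hc_disj : ∀ α < omega2, ∀ β < omega2, α ≠ β → Disjoint (c α) (c β))
    (B : Set Ordinal.{u}) (hB : B.Countable) (hBsub : ∀ ξ ∈ B, ξ < omega2) :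
    ℵ_ 1 < #{α | α < omega2 ∧ ∀ ξ ∈ c α, ∀ b ∈ B, b < ξ} := by
  let U : Set Ordinal.{u} := ⋃ b ∈ B, Iic b
  have hU : #U ≤ ℵ_ 1 := by
    have hIic (b : B) : #(Iic (b : Ordinal.{u})) ≤ ℵ_ 1 := by
      rw [← Order.Iio_succ, mk_Iio_ordinal]
      have hsucc : Order.succ (b : Ordinal.{u}) < omega2 :=
        (isSuccLimit_ord (aleph0_le_aleph 2)).succ_lt (hBsub b b.2)
      have hcard := lt_ord.1 hsucc
      rw [← one_add_one_eq_two, ← succ_aleph, Order.lt_succ_iff] at hcard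
      simpa using lift_le.{u + 1}.2 hcard
    refine (mk_biUnion_le _ _).trans ((mul_le_mul' (le_aleph0_iff_set_countable.2 hB)
      (ciSup_le' hIic)).trans ?_)
    rw [aleph0_mul_eq (aleph0_le_aleph 1)]
  let D : Set Ordinal.{v} := {α | α < omega2 ∧ ∃ ξ ∈ c α, ξ ∈ U}
  have hD : #D ≤ ℵ_ 1 := by
    choose t ht using fun α : D => α.2.2
    have hinj : Function.Injective fun α : D => (⟨t α, (ht α).2⟩ : U) := fun α β h => by
      by_contra hne
      have heq : t α = t β := congrArg Subtype.val h
      exact Finset.disjoint_left.1 (hc_disj α α.2.1 β β.2.1 fun h => hne (Subtype.ext h))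
        (ht α).1 (heq ▸ (ht β).1)
    have h := (lift_mk_le_lift_mk_of_injective hinj).trans (lift_le.2 hU)
    simpa using h
  by_contra! hS
  have hcover : Iio omega2.{v} ⊆ {α | α < omega2 ∧ ∀ ξ ∈ c α, ∀ b ∈ B, b < ξ} ∪ D := by
    intro α hα
    by_cases h : ∃ ξ ∈ c α, ξ ∈ U
    · exact Or.inr ⟨hα, h⟩
    · refine Or.inl ⟨hα, fun ξ hξ b hb => ?_⟩
      by_contra! hle
      exact h ⟨ξ, hξ, mem_biUnion hb hle⟩
  have hle := ((mk_le_mk_of_subset hcover).trans (mk_union_le _ _)).trans (add_le_add hS hD)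
  rw [mk_Iio_ordinal, omega2, card_ord, add_eq_self (aleph0_le_aleph 1)] at hle
  simp at hle

/-- A Δ-function admits no uncountable disjoint family, above an ordinal `b`, any two distinct
members of which contain a pair whose `f`-value omits `b`. -/
theorem IsDeltaFunction.countable_of_pairwise_notMem
    {f : Ordinal.{u} → Ordinal.{u} → Set Ordinal.{u}}
    (hΔ : IsDeltaFunction f) {c : Ordinal.{v} → Finset Ordinal.{u}} {H : Set Ordinal.{v}}
    (hdisj : H.Pairwise fun α β => Disjoint (c α) (c β))
    (hsub : ∀ α ∈ H, ∀ ξ ∈ c α, ξ < omega2) {b : Ordinal.{u}} (hb : b < omega2)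
    (habove : ∀ α ∈ H, ∀ ξ ∈ c α, b < ξ)
    (hH : H.Pairwise fun α β => ∃ ξ ∈ c α, ∃ η ∈ c β, b ∉ f ξ η) : H.Countable := by
  classical
  by_contra hunc
  have hinj : InjOn (fun α => insert b (c α)) H := by
    intro α hα β hβ h
    by_contra hne
    obtain ⟨ξ, hξ, -⟩ := hH hα hβ hne
    have hmem : ξ ∈ insert b (c β) := by
      rw [← show insert b (c α) = insert b (c β) from h]
      exact Finset.mem_insert_of_mem hξ
    rcases Finset.mem_insert.1 hmem with rfl | hξ'
    · exact lt_irrefl _ (habove α hα _ hξ)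
    · exact Finset.disjoint_left.1 (hdisj hα hβ hne) hξ hξ'
  obtain ⟨_, ⟨α, hα, rfl⟩, _, ⟨β, hβ, rfl⟩, hne, hgood⟩ :=
    hΔ ((fun α => insert b (c α)) '' H)
      (by
        rintro _ ⟨α, hα, rfl⟩ ξ hξ
        rcases Finset.mem_insert.1 hξ with rfl | hξ
        · exact hb
        · exact hsub α hα ξ hξ)
      fun h => hunc (countable_of_injective_of_countable_image hinj h)
  have hαβ : α ≠ β := fun h => hne (by rw [h])
  obtain ⟨ξ, hξ, η, hη, hbf⟩ := hH hα hβ hαβ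
  have hd := Finset.disjoint_left.1 (hdisj hα hβ hαβ)
  have hbξ := habove α hα ξ hξ
  have hbη := habove β hβ η hη
  refine hbf ((hgood b (by simp) ξ ?_ η ?_).1 ⟨hbξ, hbη⟩)
  · simp [hξ, hbξ.ne', hd hξ]
  · simp only [Finset.mem_sdiff, Finset.mem_insert, hη, or_true, hbη.ne', false_or, true_and]
    exact fun h => hd h hη

theorem stmt0
    (f : Ordinal → Ordinal → Set Ordinal)
    (hsymm : ∀ α β, f α β = f β α)
    (hlt : ∀ α β γ, γ ∈ f α β → γ < α ∧ γ < β)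
    (hcount : ∀ α β, (f α β).Countable)
    (hCH : Cardinal.continuum = Cardinal.aleph 1)
    (hΔ : IsDeltaFunction f)
    (c : Ordinal → Finset Ordinal)
    (hc_sub : ∀ α < omega2, ∀ ξ ∈ c α, ξ < omega2)
    (hc_disj : ∀ α < omega2, ∀ β < omega2, α ≠ β → Disjoint (c α) (c β))
    (B : Set Ordinal) (hB : B.Countable) (hBsub : ∀ ξ ∈ B, ξ < omega2)
    (n : ℕ) :
    ∃ a : Fin n → Ordinal, Function.Injective a ∧ (∀ i, a i < omega2) ∧
      ∀ i j : Fin n, i < j → ∀ ξ ∈ c (a i), ∀ η ∈ c (a j), B ⊆ f ξ η := by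
  classical
  obtain ⟨e, he⟩ := Set.countable_iff_exists_injOn.1 hB
  let T : Set Ordinal := {α | α < omega2 ∧ ∀ ξ ∈ c α, ∀ b ∈ B, b < ξ}
  let omitted : T → T → Set ℕ := fun α β =>
    {m | ∃ b ∈ B, m = e b + 1 ∧ ∃ ξ ∈ c α, ∃ η ∈ c β, b ∉ f ξ η}
  have homitted (α β : T) : omitted α β = omitted β α := by
    have hsub (α β : T) : omitted α β ⊆ omitted β α := by
      rintro m ⟨b, hb, hm, ξ, hξ, η, hη, h⟩
      exact ⟨b, hb, hm, η, hη, ξ, hξ, hsymm ξ η ▸ h⟩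
    exact (hsub α β).antisymm (hsub β α)
  have hT : 𝔠 < #T := by
    have hCH' : (𝔠 : Cardinal.{0}) = ℵ_ 1 :=
      lift_inj.1 (show lift.{_, 0} 𝔠 = lift.{_, 0} (ℵ_ 1) by simpa using hCH)
    rw [← lift_continuum.{_, 0}, hCH']
    simpa using aleph_one_lt_mk_above c hc_disj B hB hBsub
  obtain ⟨H, hH, k, hk⟩ := exists_uncountable_homogeneous hT (fun α β => sInf (omitted α β))
    fun α β => by rw [homitted]
  by_cases hgood : ∃ α ∈ H, ∃ β ∈ H, α ≠ β ∧ (omitted α β).Nonempty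
  · obtain ⟨α, hα, β, hβ, hne, hom⟩ := hgood
    obtain ⟨b, hb, hkb, -⟩ := Nat.sInf_mem hom
    rw [hk hα hβ hne] at hkb
    refine (hH (countable_of_injective_of_countable_image
      Subtype.val_injective.injOn (hΔ.countable_of_pairwise_notMem (c := c) (H := Subtype.val '' H)
        ?_ ?_ (hBsub b hb) ?_ ?_))).elim
    · rintro _ ⟨α, -, rfl⟩ _ ⟨β, -, rfl⟩ hne
      exact hc_disj α α.2.1 β β.2.1 hne
    · rintro _ ⟨α, -, rfl⟩
      exact hc_sub α α.2.1
    · rintro _ ⟨α, -, rfl⟩ ξ hξ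
      exact α.2.2 ξ hξ b hb
    · rintro _ ⟨α, hα, rfl⟩ _ ⟨β, hβ, rfl⟩ hne
      have hαβ := hk hα hβ fun h => hne (congrArg _ h)
      obtain ⟨b', hb', hkb', hpair⟩ : k ∈ omitted α β :=
        hαβ ▸ Nat.sInf_mem (Nat.nonempty_of_pos_sInf (by simp only [hαβ]; omega))
      rwa [he hb hb' (by omega)]
  · push Not at hgood
    let a : Fin n → H := fun i => Set.Infinite.natEmbedding H (fun h => hH h.countable) i
    have ha : Function.Injective a := fun i j h =>
      Fin.ext ((Set.Infinite.natEmbedding H _).injective h)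
    refine ⟨fun i => (a i : T), fun i j h => ha (Subtype.ext (Subtype.ext h)),
      fun i => (a i).1.2.1, fun i j hij ξ hξ η hη b hb => ?_⟩
    by_contra hbf
    have hempty := hgood _ (a i).2 _ (a j).2 fun h => hij.ne (ha (Subtype.ext h))
    exact notMem_empty (e b + 1) (hempty ▸ ⟨b, hb, rfl, ξ, hξ, η, hη, hbf⟩)
end
end

section
/- Let H = {H(α) : α < ω₂} be a family of subsets of ω₂ such that for each α, α ∈ H(α) and H(α) ⊆ α + 1 (i.e. max H(α) = α), and let τ_H be the topology on ω₂ generated by H ∪ {ω₂ \ H(α) : α < ω₂} as a subbase. Assume there is a function i : [ω₂]² → [ω₂]^{<ω} with i{α,β} ⊆ α ∩ β for each pair, such that for all β < α < ω₂: if β ∈ H(α) then H(β) \ H(α) ⊆ ⋃{H(γ) : γ ∈ i{α,β}}, and if β ∉ H(α) then H(β) ∩ H(α) ⊆ ⋃{H(γ) : γ ∈ i{α,β}}. Then every H(α) is a compact subset of (ω₂, τ_H); consequently (ω₂, τ_H) is locally compact. -/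
noncomputable section

/-- The underlying set of our spaces: the ordinals below ω₂. -/
abbrev Om2 := {o : Ordinal // o < (Cardinal.aleph 2).ord}

/-- If `β` is least with `H β` in the ultrafilter `U`, then `U` contains exactly those `H γ` that
contain `β`; hence `U` converges to `β` in the topology generated by the `H γ` and their
complements. -/
theorem Ultrafilter.mem_iff_of_minimal {X : Type*} [LinearOrder X] {H : X → Set X}
    (hmem : ∀ α, α ∈ H α) (hsub : ∀ α, H α ⊆ Set.Iic α) {i : X → X → Finset X}
    (hilt : ∀ α β γ, γ ∈ i α β → γ < α ∧ γ < β)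
    (hcov1 : ∀ β α, β < α → β ∈ H α → H β \ H α ⊆ ⋃ γ ∈ i α β, H γ)
    (hcov2 : ∀ β α, β < α → β ∉ H α → H β ∩ H α ⊆ ⋃ γ ∈ i α β, H γ)
    (U : Ultrafilter X) {β : X} (hβ : H β ∈ U) (hmin : ∀ γ < β, H γ ∉ U) (γ : X) :
    H γ ∈ U ↔ β ∈ H γ := by
  have hunion : (⋃ δ ∈ i γ β, H δ) ∉ U := by
    intro h
    obtain ⟨δ, hδ, hδU⟩ := (Ultrafilter.finite_biUnion_mem_iff (i γ β).finite_toSet).1 h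
    exact hmin δ (hilt γ β δ hδ).2 hδU
  rcases lt_trichotomy γ β with h | rfl | h
  · exact iff_of_false (hmin γ h) fun hm => (hsub γ hm).not_gt h
  · exact iff_of_true hβ (hmem γ)
  · constructor
    · intro hγ
      by_contra hm
      exact hunion (Filter.mem_of_superset (Filter.inter_mem hβ hγ) (hcov2 β γ h hm))
    · intro hm
      by_contra hγ
      exact hunion (Filter.mem_of_superset
        (Filter.inter_mem hβ (Ultrafilter.compl_mem_iff_notMem.2 hγ)) (hcov1 β γ h hm))

theorem stmt2
    (H : Om2 → Set Om2)
    (hmem : ∀ α, α ∈ H α) (hsub : ∀ α, H α ⊆ Set.Iic α)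
    (i : Om2 → Om2 → Finset Om2)
    (hisymm : ∀ α β, i α β = i β α)
    (hilt : ∀ α β γ, γ ∈ i α β → γ < α ∧ γ < β)
    (hcov1 : ∀ β α, β < α → β ∈ H α → H β \ H α ⊆ ⋃ γ ∈ i α β, H γ)
    (hcov2 : ∀ β α, β < α → β ∉ H α → H β ∩ H α ⊆ ⋃ γ ∈ i α β, H γ)
    (τ : TopologicalSpace Om2)
    (hτ : τ = TopologicalSpace.generateFrom
      (Set.range H ∪ (fun s => sᶜ) '' Set.range H)) :
    (∀ α, @IsCompact Om2 τ (H α)) ∧ @LocallyCompactSpace Om2 τ := by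
  subst hτ
  let _ : TopologicalSpace Om2 := TopologicalSpace.generateFrom
    (Set.range H ∪ (fun s => sᶜ) '' Set.range H)
  have hopen (α : Om2) : IsOpen (H α) :=
    TopologicalSpace.isOpen_generateFrom_of_mem (Or.inl ⟨α, rfl⟩)
  have hopen_compl (α : Om2) : IsOpen (H α)ᶜ :=
    TopologicalSpace.isOpen_generateFrom_of_mem (Or.inr ⟨H α, ⟨α, rfl⟩, rfl⟩)
  have hcompact (α : Om2) : IsCompact (H α) := by
    rw [isCompact_iff_ultrafilter_le_nhds']
    intro U hU
    obtain ⟨β, hβ, hmin⟩ := WellFounded.has_min (wellFounded_lt (α := Om2))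
      {β | H β ∈ U} ⟨α, hU⟩
    have key := Ultrafilter.mem_iff_of_minimal hmem hsub hilt hcov1 hcov2 U hβ
      fun γ hγ hγU => hmin γ hγU hγ
    refine ⟨β, (key α).1 hU, ?_⟩
    rw [TopologicalSpace.nhds_generateFrom]
    refine le_iInf₂ ?_
    rintro s ⟨hβs, ⟨γ, rfl⟩ | ⟨_, ⟨γ, rfl⟩, rfl⟩⟩
    · exact Filter.le_principal_iff.2 ((key γ).2 hβs)
    · exact Filter.le_principal_iff.2
        (Ultrafilter.compl_mem_iff_notMem.2 fun hγ => hβs ((key γ).1 hγ))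
  have : WeaklyLocallyCompactSpace Om2 :=
    ⟨fun α => ⟨H α, hcompact α, (hopen α).mem_nhds (hmem α)⟩⟩
  have : T2Space Om2 := by
    refine ⟨fun α β hne => ?_⟩
    rcases hne.lt_or_gt with h | h
    · exact ⟨H α, (H α)ᶜ, hopen α, hopen_compl α, hmem α,
        fun hm => (hsub α hm).not_gt h, disjoint_compl_right⟩
    · exact ⟨(H β)ᶜ, H β, hopen_compl β, hopen β,
        fun hm => (hsub β hm).not_gt h, hmem β, disjoint_compl_left⟩
  exact ⟨hcompact, inferInstance⟩
end
end

section
/- Let τ be a separable Hausdorff topology on ω₂ and let {H(α) : α < ω₂} be a family of τ-compact τ-open sets with α ∈ H(α) ⊆ α + 1 (i.e. max H(α) = α) for every α < ω₂. If the family is coherent, i.e. β ∈ H(α) implies H(β) ⊆ H(α), then the space (ω₂, τ) has countable tightness. -/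
noncomputable section

theorem stmt3
    (τ : TopologicalSpace Om2) (hT2 : @T2Space Om2 τ)
    (hsep : ∃ D : Set Om2, D.Countable ∧ @Dense Om2 τ D)
    (H : Om2 → Set Om2)
    (hcomp : ∀ α, @IsCompact Om2 τ (H α))
    (hopen : ∀ α, @IsOpen Om2 τ (H α))
    (hmem : ∀ α, α ∈ H α) (hsub : ∀ α, H α ⊆ Set.Iic α)
    (hcoh : ∀ α β, β ∈ H α → H β ⊆ H α) :
    ∀ A : Set Om2, ∀ x, x ∈ @closure Om2 τ A →
      ∃ B ⊆ A, B.Countable ∧ x ∈ @closure Om2 τ B := by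
  intro A x hx
  by_contra hno
  obtain ⟨D, hDc, hD⟩ := hsep
  -- The points of `D` lying in `H a` for some `a` in the countable closure of `A ∩ H x`.
  let E : Set Om2 := {d | d ∈ D ∧ ∃ a, ∃ B ⊆ A ∩ H x, B.Countable ∧ a ∈ closure B ∧ d ∈ H a}
  have hEc : E.Countable := hDc.mono fun d hd => hd.1
  have hE : ∀ d : E, ∃ a, ∃ B ⊆ A ∩ H x, B.Countable ∧ a ∈ closure B ∧ d.1 ∈ H a :=
    fun d => d.2.2
  choose a B hBA hBc haB hda using hE
  have : Countable E := hEc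
  have hCA : (⋃ d, B d) ⊆ A ∩ H x := Set.iUnion_subset hBA
  have hCc : (⋃ d, B d).Countable := Set.countable_iUnion hBc
  have hCH : closure (⋃ d, B d) ⊆ H x :=
    closure_minimal (hCA.trans Set.inter_subset_right) (hcomp x).isClosed
  have hCx : x ∉ closure (⋃ d, B d) := fun h =>
    hno ⟨_, hCA.trans Set.inter_subset_left, hCc, h⟩
  obtain ⟨t, htC, ht⟩ := ((hcomp x).of_isClosed_subset isClosed_closure hCH).elim_nhds_subcover
    H fun y _ => (hopen y).mem_nhds (hmem y)
  have hKclosed : IsClosed (⋃ y ∈ t, H y) :=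
    t.finite_toSet.isClosed_biUnion fun y _ => (hcomp y).isClosed
  -- By coherence and density, finitely many sets `H y` already cover `A ∩ H x`.
  have hAK : A ∩ H x ⊆ ⋃ y ∈ t, H y := by
    intro b hb
    have hEK : H b ∩ D ⊆ ⋃ y ∈ t, H y := by
      rintro d ⟨hdb, hdD⟩
      let e : E := ⟨d, hdD, b, {b}, Set.singleton_subset_iff.2 hb, Set.countable_singleton b,
        subset_closure rfl, hdb⟩
      obtain ⟨y, hyt, hy⟩ := Set.mem_iUnion₂.1
        (ht (closure_mono (Set.subset_iUnion B e) (haB e)))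
      exact Set.mem_iUnion₂.2 ⟨y, hyt, hcoh y _ hy (hda e)⟩
    exact closure_minimal hEK hKclosed (hD.open_subset_closure_inter (hopen b) (hmem b))
  have hxA : x ∈ closure (A ∩ H x) := by
    rw [Set.inter_comm]
    exact (hopen x).inter_closure ⟨hmem x, hx⟩
  obtain ⟨y, hyt, hxy⟩ := Set.mem_iUnion₂.1 (closure_minimal hAK hKclosed hxA)
  have hyx : y = x := le_antisymm (hsub x (hCH (htC y hyt))) (hsub y hxy)
  exact hCx (hyx ▸ htC y hyt)
end
end

section
/- If a topological space X is initially ω₁-compact and has countable tightness, then X contains no free sequence of length ω₁, i.e. there is no free sequence {y_ξ : ξ < ω₁} in X. -/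
noncomputable section

/-- A space is initially ω₁-compact if every open cover of cardinality at most ℵ₁
has a finite subcover. -/
def InitiallyOmega1Compact (X : Type*) [TopologicalSpace X] : Prop :=
  ∀ U : Set (Set X), (∀ u ∈ U, IsOpen u) → ⋃₀ U = Set.univ →
    Cardinal.mk ↥U ≤ Cardinal.aleph 1 →
    ∃ V ⊆ U, V.Finite ∧ ⋃₀ V = Set.univ

/-- A space has countable tightness if every point in the closure of a set `A` is in
the closure of a countable subset of `A`. -/
def CountableTightness (X : Type*) [TopologicalSpace X] : Prop :=
  ∀ A : Set X, ∀ x ∈ closure A, ∃ B ⊆ A, B.Countable ∧ x ∈ closure B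

/-- `y` (restricted to the ordinals below `μ`) is a free sequence of length `μ`. -/
def IsFreeSequence {X : Type*} [TopologicalSpace X] (μ : Ordinal) (y : Ordinal → X) : Prop :=
  ∀ η < μ, Disjoint (closure (y '' Set.Iio η)) (closure (y '' Set.Ico η μ))

open Cardinal Ordinal Set

/-- A countable set of ordinals below `ω₁` has a strict upper bound below `ω₁`. -/
theorem Set.Countable.exists_lt_ord_aleph_one {S : Set Ordinal} (hS : S.Countable)
    (hlt : ∀ ξ ∈ S, ξ < (aleph 1).ord) : ∃ η < (aleph 1).ord, ∀ ξ ∈ S, ξ < η := by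
  have := hS.to_subtype
  rw [ord_aleph] at hlt ⊢
  refine ⟨Order.succ (⨆ ξ : S, ξ.1), ?_, fun ξ hξ =>
    Order.lt_succ_of_le (Ordinal.le_iSup (fun ξ : S => ξ.1) ⟨ξ, hξ⟩)⟩
  exact (isSuccLimit_omega 1).succ_lt (iSup_lt_omega_one fun ξ => hlt ξ.1 ξ.2)

/-- In an initially `ω₁`-compact space, a decreasing `ω₁`-sequence of nonempty closed sets
has nonempty intersection. -/
theorem InitiallyOmega1Compact.exists_mem_of_antitone {X : Type*} [TopologicalSpace X]
    (hX : InitiallyOmega1Compact X) {F : Ordinal → Set X} (hF : Antitone F)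
    (hclosed : ∀ η, IsClosed (F η)) (hne : ∀ η < (aleph 1).ord, (F η).Nonempty) :
    ∃ x, ∀ η < (aleph 1).ord, x ∈ F η := by
  by_contra! hempty
  obtain ⟨T, hT, hTfin, hTuniv⟩ := exists_subset_image_finite_and.1 <|
    hX ((fun η => (F η)ᶜ) '' Iio (aleph 1).ord)
      (by rintro _ ⟨η, -, rfl⟩; exact (hclosed η).isOpen_compl)
      (by
        refine eq_univ_of_forall fun x => ?_
        obtain ⟨η, hη, hx⟩ := hempty x
        exact ⟨_, ⟨η, hη, rfl⟩, hx⟩)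
      (by
        have h := mk_image_le_lift (f := fun η => (F η)ᶜ) (s := Iio (aleph 1).ord)
        rw [Cardinal.mk_Iio_ordinal, card_ord] at h
        simpa using h)
  obtain ⟨η, hη, hlt⟩ := hTfin.countable.exists_lt_ord_aleph_one hT
  obtain ⟨x, hx⟩ := hne η hη
  obtain ⟨_, ⟨ξ, hξ, rfl⟩, hxξ⟩ := hTuniv.ge (mem_univ x)
  exact hxξ (hF (hlt ξ hξ).le hx)

theorem stmt5 {X : Type*} [TopologicalSpace X]
    (hinit : InitiallyOmega1Compact X) (ht : CountableTightness X) :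
    ¬ ∃ y : Ordinal → X, IsFreeSequence ((Cardinal.aleph 1).ord) y := by
  rintro ⟨y, hy⟩
  obtain ⟨x, hx⟩ := hinit.exists_mem_of_antitone
    (F := fun η => closure (y '' Ico η (aleph 1).ord))
    (fun a b hab => closure_mono (image_mono (Ico_subset_Ico_left hab)))
    (fun _ => isClosed_closure)
    (fun η hη => ⟨y η, subset_closure ⟨η, ⟨le_rfl, hη⟩, rfl⟩⟩)
  have h0 : (0 : Ordinal) < (aleph 1).ord := by simpa only [ord_aleph] using omega_pos 1
  obtain ⟨B, hB, hBc, hxB⟩ := ht _ x (hx 0 h0)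
  have := hBc.to_subtype
  choose g hg hgB using fun b : B => hB b.2
  obtain ⟨η, hη, hlt⟩ := (countable_range g).exists_lt_ord_aleph_one
    (forall_mem_range.2 fun b => (hg b).2)
  refine disjoint_left.1 (hy η hη) (closure_mono (fun b hb => ?_) hxB) (hx η hη)
  exact ⟨g ⟨b, hb⟩, hlt _ (mem_range_self _), hgB ⟨b, hb⟩⟩
end
end

section
/- Every non-compact, initially ω₁-compact topological space of countable tightness contains a countable subset whose closure is not compact. -/
noncomputable section

open Set Cardinal

/-- Initial ω₁-compactness, relativized to a closed subset. -/
theorem InitiallyOmega1Compact.exists_finite_subcover {X : Type*} [TopologicalSpace X]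
    (hX : InitiallyOmega1Compact X) {C : Set X} (hC : IsClosed C) {W : Set (Set X)}
    (hW : ∀ w ∈ W, IsOpen w) (hCW : C ⊆ ⋃₀ W) (hcard : #W ≤ ℵ₁) :
    ∃ V ⊆ W, V.Finite ∧ C ⊆ ⋃₀ V := by
  obtain ⟨V, hVW, hV, hcov⟩ := hX (insert Cᶜ W)
    (forall_mem_insert.2 ⟨hC.isOpen_compl, hW⟩)
    (by
      rw [sUnion_insert]
      exact eq_univ_of_forall fun x ↦ (em (x ∈ C)).symm.imp id fun hx ↦ hCW hx)
    (mk_insert_le.trans (add_le_of_le aleph0_lt_aleph_one.le hcard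
      (one_le_aleph0.trans aleph0_lt_aleph_one.le)))
  refine ⟨V \ {Cᶜ}, fun v hv ↦ (hVW hv.1).resolve_left hv.2, hV.sdiff, fun x hx ↦ ?_⟩
  obtain ⟨v, hv, hxv⟩ : x ∈ ⋃₀ V := hcov ▸ mem_univ x
  exact ⟨v, ⟨hv, fun h ↦ (h ▸ hxv : x ∈ Cᶜ) hx⟩, hxv⟩

/-- Simultaneous transfinite recursion: `V i` is computed from the earlier points, and `x i` from
the sets `V j` with `j ≤ i`. -/
theorem exists_simultaneous_recursion {I X Y : Type*} [LinearOrder I] [WellFoundedLT I]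
    (c : Set X → Set Y) (d : Set Y → X) :
    ∃ (x : I → X) (V : I → Set Y),
      (∀ i, V i = c (x '' Iio i)) ∧ ∀ i, x i = d (⋃ j ∈ Iic i, V j) := by
  let step (i : I) (f : ∀ j, j < i → X × Set Y) : X × Set Y :=
    let Vi := c {y | ∃ j, ∃ h : j < i, (f j h).1 = y}
    (d ((⋃ j, ⋃ h : j < i, (f j h).2) ∪ Vi), Vi)
  let F : I → X × Set Y := wellFounded_lt.fix step
  have hF (i : I) : F i = step i fun j _ ↦ F j := wellFounded_lt.fix_eq step i
  have hV (i : I) : (F i).2 = c ((fun j ↦ (F j).1) '' Iio i) := by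
    rw [hF]
    simp [step, image]
  refine ⟨fun i ↦ (F i).1, fun i ↦ (F i).2, hV, fun i ↦ ?_⟩
  have hunion : ⋃ j ∈ Iic i, (F j).2 = (⋃ j, ⋃ _ : j < i, (F j).2) ∪ (F i).2 := by
    rw [← Iio_insert, biUnion_insert, union_comm]
    rfl
  change (F i).1 = d (⋃ j ∈ Iic i, (F j).2)
  rw [hunion, hF i]

theorem exists_gt_of_countable {I : Type*} [LinearOrder I] [Uncountable I]
    (hI : ∀ i : I, (Iic i).Countable) {B : Set I} (hB : B.Countable) : ∃ i, ∀ b ∈ B, b < i := by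
  by_contra! h
  refine not_countable_univ ((hB.biUnion fun b _ ↦ hI b).mono fun i _ ↦ ?_)
  obtain ⟨b, hb, hib⟩ := h i
  exact mem_biUnion hb hib

theorem exists_subset_image_Iio_of_countable {I X : Type*} [LinearOrder I] [Uncountable I]
    (hI : ∀ i : I, (Iic i).Countable) {x : I → X} {B : Set X} (hB : B.Countable)
    (hBx : B ⊆ range x) : ∃ i, B ⊆ x '' Iio i := by
  choose! a ha using fun b (hb : b ∈ B) ↦ hBx hb
  obtain ⟨i, hi⟩ := exists_gt_of_countable hI (hB.image a)
  exact ⟨i, fun b hb ↦ ⟨a b, hi _ (mem_image_of_mem a hb), ha b hb⟩⟩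

theorem countable_Iic_toType_ord_aleph_one (i : (ℵ₁ : Cardinal).ord.ToType) :
    (Iic i).Countable := by
  rw [← Iio_insert]
  refine Countable.insert i ?_
  rw [← le_aleph0_iff_set_countable, ← Order.lt_succ_iff, succ_aleph0]
  simpa using mk_Iio_lt i (by simp)

/-- A countably tight, initially ω₁-compact space in which countable sets have compact closure
is compact. -/
theorem InitiallyOmega1Compact.isCompact_univ {X : Type*} [TopologicalSpace X]
    (hinit : InitiallyOmega1Compact X) (ht : CountableTightness X)
    (hcpt : ∀ S : Set X, S.Countable → IsCompact (closure S)) : IsCompact (univ : Set X) := by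
  refine isCompact_generateFrom (S := {u | IsOpen u})
    (TopologicalSpace.generateFrom_setOfPred_isOpen _).symm fun U hU hcov ↦ ?_
  by_contra! hno
  have hc (S : Set X) : ∃ Q ⊆ U, S.Countable → Q.Finite ∧ closure S ⊆ ⋃₀ Q := by
    by_cases hS : S.Countable
    · obtain ⟨Q, hQU, hQ, hSQ⟩ := (hcpt S hS).elim_finite_subcover_image
        (c := id) hU (by simpa [← sUnion_eq_biUnion] using (subset_univ _).trans hcov)
      exact ⟨Q, hQU, fun _ ↦ ⟨hQ, by simpa [← sUnion_eq_biUnion] using hSQ⟩⟩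
    · exact ⟨∅, empty_subset _, fun h ↦ absurd h hS⟩
  have hd (W : Set (Set X)) : ∃ y : X, W ⊆ U → W.Countable → y ∉ ⋃₀ W := by
    by_contra! h
    obtain ⟨y⟩ : Nonempty X := by
      by_contra hX
      exact hno ∅ (empty_subset _) finite_empty fun y ↦ absurd ⟨y⟩ hX
    obtain ⟨V, hVW, hV, hVcov⟩ := hinit.exists_finite_subcover isClosed_univ
      (fun w hw ↦ hU ((h y).1 hw)) (fun z _ ↦ (h z).2.2)
      ((le_aleph0_iff_set_countable.2 (h y).2.1).trans aleph0_lt_aleph_one.le)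
    exact hno V (hVW.trans (h y).1) hV hVcov
  choose c hcU hc using hc
  choose d hd using hd
  let I := (ℵ₁ : Cardinal).ord.ToType
  have hIcard : #I = ℵ₁ := mk_ord_toType _
  have hI : ∀ i : I, (Iic i).Countable := countable_Iic_toType_ord_aleph_one
  have : Uncountable I := by
    rw [← aleph0_lt_mk_iff, hIcard]
    exact aleph0_lt_aleph_one
  obtain ⟨x, V, hV, hx⟩ := exists_simultaneous_recursion (I := I) c d
  have himage (i : I) : (x '' Iio i).Countable := ((hI i).mono Iio_subset_Iic_self).image x
  have hVU (i : I) : V i ⊆ U := hV i ▸ hcU _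
  have hVfin (i : I) : (V i).Finite := hV i ▸ (hc _ (himage i)).1
  have hVcov (i : I) : closure (x '' Iio i) ⊆ ⋃₀ V i := hV i ▸ (hc _ (himage i)).2
  have hxV (i : I) : x i ∉ ⋃₀ ⋃ j ∈ Iic i, V j :=
    hx i ▸ hd _ (iUnion₂_subset fun j _ ↦ hVU j) ((hI i).biUnion fun j _ ↦ (hVfin j).countable)
  have hclosure : closure (range x) ⊆ ⋃₀ ⋃ i, V i := fun y hy ↦ by
    obtain ⟨B, hBx, hB, hyB⟩ := ht _ y hy
    obtain ⟨i, hi⟩ := exists_subset_image_Iio_of_countable hI hB hBx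
    exact sUnion_subset_sUnion (subset_iUnion V i) (hVcov i (closure_mono hi hyB))
  have hcard : #(⋃ i, V i) ≤ ℵ₁ := by
    refine mk_iUnion_le_sum_mk.trans ((sum_le_sum _ (fun _ ↦ ℵ₁) fun i ↦ ?_).trans ?_)
    · exact ((hVfin i).countable.le_aleph0).trans aleph0_lt_aleph_one.le
    · rw [sum_const', hIcard, mul_eq_self aleph0_lt_aleph_one.le]
  obtain ⟨Q, hQV, hQ, hQcov⟩ := hinit.exists_finite_subcover isClosed_closure
    (fun w hw ↦ hU (iUnion_subset hVU hw)) hclosure hcard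
  choose! a ha using fun q (hq : q ∈ Q) ↦ mem_iUnion.1 (hQV hq)
  obtain ⟨i, hi⟩ := exists_gt_of_countable hI (hQ.countable.image a)
  refine hxV i (sUnion_subset_sUnion (fun q hq ↦ ?_) (hQcov (subset_closure (mem_range_self i))))
  exact mem_biUnion (hi _ (mem_image_of_mem a hq)).le (ha q hq)

theorem stmt6 {X : Type*} [TopologicalSpace X]
    (hnc : ¬ IsCompact (Set.univ : Set X))
    (hinit : InitiallyOmega1Compact X) (ht : CountableTightness X) :
    ∃ S : Set X, S.Countable ∧ ¬ IsCompact (closure S) := by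
  by_contra! h
  exact hnc (hinit.isCompact_univ ht h)
end
end

section
/- Let X be a locally compact Hausdorff, initially ω₁-compact, non-compact space of countable tightness, and let αX = X ∪ {p} be its one-point compactification. Then αX has countable tightness; moreover X is a non-closed subset of αX (so X is an initially ω₁-compact non-closed subspace of the countably tight compact space αX). -/
noncomputable section

/-- In an initially ω₁-compact space, every cover of a closed set by at most ℵ₁ open sets has a
finite subcover. -/
theorem InitiallyOmega1Compact.exists_finset_cover {X : Type*} [TopologicalSpace X]
    (hX : InitiallyOmega1Compact X) {Y : Set X} (hY : IsClosed Y) {ι : Type}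
    (hι : Cardinal.mk ι ≤ Cardinal.aleph 1) (U : ι → Set X) (hU : ∀ i, IsOpen (U i))
    (hcov : Y ⊆ ⋃ i, U i) : ∃ t : Finset ι, Y ⊆ ⋃ i ∈ t, U i := by
  obtain ⟨V, hVU, hVfin, hV⟩ := hX (insert Yᶜ (Set.range U))
    (by
      rintro u (rfl | ⟨i, rfl⟩)
      exacts [hY.isOpen_compl, hU i])
    (by
      refine Set.eq_univ_of_forall fun x => ?_
      by_cases hx : x ∈ Y
      · obtain ⟨i, hi⟩ := Set.mem_iUnion.1 (hcov hx)
        exact ⟨U i, Or.inr ⟨i, rfl⟩, hi⟩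
      · exact ⟨Yᶜ, Or.inl rfl, hx⟩)
    (by
      have hrange : Cardinal.mk (Set.range U) ≤ Cardinal.aleph 1 := by
        have h := (Cardinal.mk_range_le_lift (f := U)).trans (Cardinal.lift_le.2 hι)
        simpa using h
      refine (Cardinal.mk_insert_le).trans ?_
      exact Cardinal.add_le_of_le (Cardinal.aleph0_le_aleph 1) hrange
        (Cardinal.one_le_aleph0.trans (Cardinal.aleph0_le_aleph 1)))
  have hfin : (V ∩ Set.range U).Finite := hVfin.subset Set.inter_subset_left
  obtain ⟨s, hs, hsfin, hsV⟩ : ∃ s ⊆ (Set.univ : Set ι), s.Finite ∧ U '' s = V ∩ Set.range U := by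
    obtain ⟨s, hs, h⟩ := (Set.exists_subset_image_finite_and (f := U) (s := Set.univ)
      (p := fun T => T = V ∩ Set.range U)).1
        ⟨V ∩ Set.range U, by simp, hfin, rfl⟩
    exact ⟨s, hs, h⟩
  refine ⟨hsfin.toFinset, fun x hx => ?_⟩
  obtain ⟨v, hv, hxv⟩ : x ∈ ⋃₀ V := hV ▸ Set.mem_univ x
  rcases hVU hv with rfl | hvr
  · exact absurd hx hxv
  · obtain ⟨i, hi, rfl⟩ : v ∈ U '' s := hsV ▸ ⟨hv, hvr⟩
    exact Set.mem_biUnion (by simpa using hi) hxv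

/-- A closed non-compact subset of a locally compact initially ω₁-compact space is not covered by
countably many compact sets. -/
theorem InitiallyOmega1Compact.exists_notMem_iUnion {X : Type*} [TopologicalSpace X]
    [LocallyCompactSpace X] (hX : InitiallyOmega1Compact X) {Y : Set X} (hY : IsClosed Y)
    (hYnc : ¬ IsCompact Y) {ι : Type} [Countable ι] (K : ι → Set X)
    (hK : ∀ i, IsCompact (K i)) : ∃ y ∈ Y, ∀ i, y ∉ K i := by
  by_contra! hcon
  choose L hL hKL using fun i => exists_compact_superset (hK i)
  obtain ⟨t, ht⟩ := hX.exists_finset_cover hY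
    (Cardinal.mk_le_aleph0.trans (Cardinal.aleph0_le_aleph 1)) (fun i => interior (L i))
    (fun i => isOpen_interior) fun y hy => by
      obtain ⟨i, hi⟩ := hcon y hy
      exact Set.mem_iUnion.2 ⟨i, hKL i hi⟩
  exact hYnc ((t.isCompact_biUnion fun i _ => hL i).of_isClosed_subset hY
    (ht.trans (Set.iUnion₂_mono fun i _ => interior_subset)))

/-- In a locally compact, initially ω₁-compact space of countable tightness, a set all of whose
countable subsets have compact closure has compact closure. -/
theorem InitiallyOmega1Compact.isCompact_closure {X : Type*} [TopologicalSpace X]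
    [LocallyCompactSpace X] (hX : InitiallyOmega1Compact X) (ht : CountableTightness X)
    {A : Set X} (hA : ∀ B ⊆ A, B.Countable → IsCompact (closure B)) :
    IsCompact (closure A) := by
  by_contra hnc
  -- Countable subsets of the closure of `A` also have compact closure.
  have hcl : ∀ C ⊆ closure A, C.Countable → IsCompact (closure C) := by
    intro C hC hCc
    choose! B hBA hBc hxB using fun x (hx : x ∈ C) => ht A x (hC hx)
    refine (hA (⋃ x ∈ C, B x) (Set.iUnion₂_subset hBA) (hCc.biUnion hBc)).of_isClosed_subset
      isClosed_closure (closure_minimal (fun x hx => ?_) isClosed_closure)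
    exact closure_mono (Set.subset_biUnion_of_mem hx) (hxB x hx)
  -- A compact set depending on `C` only, containing `closure C` in its interior if possible.
  have hex : ∀ C : Set X, ∃ K, IsCompact K ∧ (IsCompact (closure C) → closure C ⊆ interior K) := by
    intro C
    by_cases hC : IsCompact (closure C)
    · obtain ⟨K, hK, hCK⟩ := exists_compact_superset hC
      exact ⟨K, hK, fun _ => hCK⟩
    · exact ⟨∅, isCompact_empty, fun h => absurd h hC⟩
  choose K hK hCK using hex
  let W : Type := (Cardinal.aleph 1).ord.ToType
  have hW : Cardinal.mk W = Cardinal.aleph 1 := Cardinal.mk_ord_toType _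
  have hIio : ∀ a : W, (Set.Iio a).Countable := fun a => by
    rw [← Cardinal.le_aleph0_iff_set_countable, ← Order.lt_succ_iff, Cardinal.succ_aleph0]
    exact (Cardinal.mk_Iio_lt a ((congrArg Cardinal.ord hW).trans
      (Ordinal.type_toType _).symm)).trans_eq hW
  have hpick : ∀ (a : W) (g : ∀ b, b < a → X), ∃ y ∈ closure A,
      ∀ b (hb : b < a), y ∉ K {z | ∃ c, ∃ hc : c < b, z = g c (hc.trans hb)} := by
    intro a g
    have : Countable (Set.Iio a) := (hIio a).to_subtype
    obtain ⟨y, hy, hyK⟩ := hX.exists_notMem_iUnion isClosed_closure hnc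
      (fun b : Set.Iio a => K {z | ∃ c, ∃ hc : c < b.1, z = g c (hc.trans b.2)}) fun b => hK _
    exact ⟨y, hy, fun b hb => hyK ⟨b, hb⟩⟩
  choose F hFA hFK using hpick
  let x : W → X := wellFounded_lt.fix F
  have hx : ∀ a, x a = F a fun b _ => x b := fun a => wellFounded_lt.fix_eq F a
  have hxA : ∀ a, x a ∈ closure A := fun a => hx a ▸ hFA a _
  have hxK : ∀ a b, b < a → x a ∉ K (x '' Set.Iio b) := by
    intro a b hb
    have h := hFK a (fun b _ => x b) b hb
    rw [← hx a] at h
    convert h using 3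
    ext z
    simp [eq_comm]
  have hsegment : ∀ b, closure (x '' Set.Iio b) ⊆ interior (K (x '' Set.Iio b)) := fun b =>
    hCK _ (hcl _ (by rintro _ ⟨a, -, rfl⟩; exact hxA a) ((hIio b).image x))
  have hunc : ∀ s : Set W, s.Countable → ∃ a, a ∉ s := by
    intro s hs
    by_contra! h
    have h0 : Cardinal.mk W ≤ Cardinal.aleph0 := by
      rw [Cardinal.mk_le_aleph0_iff, ← Set.countable_univ_iff]
      exact hs.mono fun a _ => h a
    exact absurd (hW ▸ h0) (not_le.2 Cardinal.aleph0_lt_aleph_one)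
  have hbdd : ∀ s : Set W, s.Countable → ∃ a, ∀ b ∈ s, b < a := by
    intro s hs
    obtain ⟨a, ha⟩ := hunc (⋃ b ∈ s, Set.Iic b) (hs.biUnion fun b _ => by
      rw [← Set.Iio_insert]
      exact (hIio b).insert b)
    exact ⟨a, fun b hb => not_le.1 fun h => ha (Set.mem_biUnion hb h)⟩
  obtain ⟨t, htcov⟩ := hX.exists_finset_cover (isClosed_closure (s := Set.range x)) hW.le
    (fun b => interior (K (x '' Set.Iio b))) (fun b => isOpen_interior) fun y hy => by
      obtain ⟨B, hB, hBc, hyB⟩ := ht _ y hy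
      obtain ⟨s, hs, rfl⟩ : ∃ s : Set W, s.Countable ∧ x '' s = B := by
        have : Nonempty W := ⟨(hunc ∅ Set.countable_empty).choose⟩
        choose! g hg using hB
        exact ⟨g '' B, hBc.image g, by
          rw [← Set.image_comp]
          exact (Set.image_congr fun z hz => hg hz).trans (Set.image_id B)⟩
      obtain ⟨b, hb⟩ := hbdd s hs
      exact Set.mem_iUnion.2 ⟨b, hsegment b (closure_mono (Set.image_mono hb) hyB)⟩
  obtain ⟨a, ha⟩ := hbdd t t.countable_toSet
  obtain ⟨b, hb, hab⟩ := Set.mem_iUnion₂.1 (htcov (subset_closure ⟨a, rfl⟩))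
  exact hxK a b (ha b hb) (interior_subset hab)

/-- The point at infinity adheres to a set iff the set does not have compact closure. -/
theorem OnePoint.infty_mem_closure_image_coe {X : Type*} [TopologicalSpace X] {C : Set X} :
    OnePoint.infty ∈ closure (((↑) : X → OnePoint X) '' C) ↔ ¬ IsCompact (closure C) := by
  constructor
  · intro h hC
    have hcl : IsClosed (((↑) : X → OnePoint X) '' closure C) :=
      isOpen_compl_iff.1 (OnePoint.isOpen_compl_image_coe.2 ⟨isClosed_closure, hC⟩)
    exact OnePoint.infty_notMem_image_coe
      (closure_minimal (Set.image_mono subset_closure) hcl h)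
  · intro hC
    by_contra h
    set D := closure (((↑) : X → OnePoint X) '' C) with hD
    have hDeq : ((↑) : X → OnePoint X) '' (((↑) : X → OnePoint X) ⁻¹' D) = D := by
      refine Set.image_preimage_eq_of_subset fun z hz => ?_
      induction z using OnePoint.rec with
      | infty => exact absurd hz h
      | coe z => exact ⟨z, rfl⟩
    have hop : IsOpen (((↑) : X → OnePoint X) '' (((↑) : X → OnePoint X) ⁻¹' D))ᶜ := by
      rw [hDeq]
      exact isClosed_closure.isOpen_compl
    obtain ⟨hcl, hcomp⟩ := OnePoint.isOpen_compl_image_coe.1 hop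
    exact hC (hcomp.of_isClosed_subset isClosed_closure
      (closure_minimal (fun z hz => subset_closure ⟨z, hz, rfl⟩) hcl))

theorem stmt7 {X : Type*} [TopologicalSpace X] [T2Space X] [LocallyCompactSpace X]
    (hnc : ¬ IsCompact (Set.univ : Set X))
    (hinit : InitiallyOmega1Compact X) (ht : CountableTightness X) :
    CountableTightness (OnePoint X) ∧
      ¬ IsClosed (Set.range ((↑) : X → OnePoint X)) := by
  constructor
  · intro A p hp
    by_cases hpA : p ∈ A
    · exact ⟨{p}, by simpa using hpA, Set.countable_singleton p, subset_closure rfl⟩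
    set A' := ((↑) : X → OnePoint X) ⁻¹' A with hA'
    have hsub : ((↑) : X → OnePoint X) '' A' ⊆ A := Set.image_preimage_subset _ _
    induction p using OnePoint.rec with
    | infty =>
      have hAeq : ((↑) : X → OnePoint X) '' A' = A := by
        refine Set.image_preimage_eq_of_subset fun z hz => ?_
        induction z using OnePoint.rec with
        | infty => exact absurd hz hpA
        | coe z => exact ⟨z, rfl⟩
      rw [← hAeq, OnePoint.infty_mem_closure_image_coe] at hp
      by_contra! hcon
      refine hp (hinit.isCompact_closure ht fun B hB hBc => ?_)
      by_contra hBnc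
      exact hcon _ ((Set.image_mono hB).trans hsub) (hBc.image _)
        (OnePoint.infty_mem_closure_image_coe.2 hBnc)
    | coe x =>
      have hx : x ∈ closure A' := by
        rw [hA', ← OnePoint.isOpenEmbedding_coe.isOpenMap.preimage_closure_eq_closure_preimage
          OnePoint.continuous_coe]
        exact hp
      obtain ⟨B, hB, hBc, hxB⟩ := ht A' x hx
      exact ⟨_, (Set.image_mono hB).trans hsub, hBc.image _,
        image_closure_subset_closure_image OnePoint.continuous_coe ⟨x, hxB, rfl⟩⟩
  · intro hcl
    rw [← Set.image_univ] at hcl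
    exact hnc (OnePoint.isOpen_compl_image_coe.1 hcl.isOpen_compl).2
end
end

section
/- Assume CH holds (2^ω = ω₁). Then every initially ω₁-compact regular Hausdorff (T₃) space of countable tightness is compact. -/
noncomputable section

open Set
open Cardinal hiding univ

universe u v

/-- The Continuum Hypothesis does not depend on the universe in which it is stated. -/
theorem continuum_eq_aleph_one_transfer (h : continuum.{v} = aleph 1) :
    continuum.{u} = aleph 1 := by
  have hlift := congrArg Cardinal.lift.{u} h
  rw [lift_continuum, lift_aleph, Ordinal.lift_one] at hlift
  apply Cardinal.lift_injective.{v}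
  rw [lift_continuum, lift_aleph, Ordinal.lift_one, hlift]

/-- An uncountable well-order of cardinality `ℵ₁` with countable proper initial segments. -/
theorem exists_wellOrder_countable_Iio :
    ∃ (I : Type) (_ : LinearOrder I) (_ : WellFoundedLT I),
      #I = aleph 1 ∧ ∀ a : I, (Iio a).Countable := by
  refine ⟨(aleph 1).ord.ToType, inferInstance, inferInstance, by simp, fun a => ?_⟩
  exact le_aleph0_iff_set_countable.1
    (Order.lt_succ_iff.1 ((mk_Iio_lt a (by simp)).trans_eq (by simp)))

/-- In a well-order as above, countable sets are contained in proper initial segments. -/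
theorem exists_subset_Iio_of_countable {I : Type} [LinearOrder I] (hI : #I = aleph 1)
    (hc : ∀ a : I, (Iio a).Countable) {S : Set I} (hS : S.Countable) :
    ∃ a, S ⊆ Iio a := by
  by_contra! h
  have huniv : (univ : Set I) ⊆ ⋃ s ∈ S, insert s (Iio s) := by
    intro a _
    obtain ⟨s, hs, hsa⟩ := not_subset.1 (h a)
    refine mem_biUnion hs ?_
    rcases (not_lt.1 hsa).eq_or_lt with rfl | hlt
    · exact mem_insert _ _
    · exact mem_insert_of_mem _ hlt
  have hcount : (univ : Set I).Countable :=
    (hS.biUnion fun s _ => (hc s).insert s).mono huniv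
  have hle : #I ≤ ℵ₀ := by simpa using le_aleph0_iff_set_countable.2 hcount
  exact absurd (hI ▸ hle) (not_le.2 aleph0_lt_aleph_one)

namespace InitiallyOmega1Compact

variable {X : Type u} [TopologicalSpace X]

/-- Under CH, countable subsets of a regular initially `ω₁`-compact space have compact closure. -/
theorem isCompact_closure_of_countable [RegularSpace X] (hCH : continuum.{u} = aleph 1)
    (hinit : InitiallyOmega1Compact X) {D : Set X} (hD : D.Countable) :
    IsCompact (closure D) := by
  refine isCompact_of_finite_subcover fun {ι} U hU hDU => ?_
  let G : Set (Set X) := {E | E ⊆ D ∧ ∃ i, closure E ⊆ U i}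
  let W : Set (Set X) := insert (closure D)ᶜ ((fun E => (closure (D \ E))ᶜ) '' G)
  have hWopen : ∀ w ∈ W, IsOpen w := by
    rintro w (rfl | ⟨E, -, rfl⟩) <;> exact isClosed_closure.isOpen_compl
  have hWcover : ⋃₀ W = univ := by
    refine eq_univ_of_forall fun x => ?_
    by_cases hx : x ∈ closure D
    · obtain ⟨i, hi⟩ := mem_iUnion.1 (hDU hx)
      obtain ⟨K, ⟨hK, hKc⟩, hKU⟩ :=
        (closed_nhds_basis x).mem_iff.1 ((hU i).mem_nhds hi)
      refine ⟨_, mem_insert_of_mem _ ⟨K ∩ D, ⟨inter_subset_right, i, ?_⟩, rfl⟩, ?_⟩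
      · exact (closure_minimal inter_subset_left hKc).trans hKU
      · intro hx'
        obtain ⟨y, hyK, hyD, hy⟩ := mem_closure_iff_nhds.1 hx' K hK
        exact hy ⟨hyK, hyD⟩
    · exact ⟨_, mem_insert _ _, hx⟩
  have hGcard : #G ≤ continuum := by
    calc #G ≤ #(𝒫 D) := mk_le_mk_of_subset fun E hE => hE.1
      _ = 2 ^ #D := mk_powerset D
      _ ≤ 2 ^ ℵ₀ := power_le_power_left two_ne_zero (le_aleph0_iff_set_countable.2 hD)
      _ = continuum := two_power_aleph0
  have hWcard : #W ≤ aleph 1 := by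
    rw [← hCH]
    exact mk_insert_le.trans (add_le_of_le aleph0_le_continuum (mk_image_le.trans hGcard)
      (one_lt_aleph0.le.trans aleph0_le_continuum))
  obtain ⟨V, hVW, hVfin, hVcover⟩ := hinit W hWopen hWcover hWcard
  have hsub : ∀ w ∈ V, ∃ t : Finset ι, w ∩ closure D ⊆ ⋃ i ∈ t, U i := by
    intro w hw
    rcases hVW hw with rfl | ⟨E, ⟨-, i, hi⟩, rfl⟩
    · exact ⟨∅, by simp⟩
    · refine ⟨{i}, ?_⟩
      rintro x ⟨hx, hxD⟩
      have hxE : x ∈ closure (D \ E) ∪ closure E := by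
        rw [← closure_union]
        exact closure_mono (by simp) hxD
      simpa using hi (hxE.resolve_left hx)
  classical
  choose! t ht using hsub
  refine ⟨hVfin.toFinset.biUnion t, fun x hx => ?_⟩
  obtain ⟨w, hw, hxw⟩ : x ∈ ⋃₀ V := hVcover ▸ mem_univ x
  obtain ⟨i, hi, hxi⟩ := mem_iUnion₂.1 (ht w hw ⟨hxw, hx⟩)
  exact mem_iUnion₂.2 ⟨i, Finset.mem_biUnion.2 ⟨w, hVfin.mem_toFinset.2 hw, hi⟩, hxi⟩

/-- A countable subcover yields a finite one. -/
theorem exists_finset_cover_of_countable (hinit : InitiallyOmega1Compact X) {ι : Type u}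
    {U : ι → Set X} (hU : ∀ i, IsOpen (U i)) {C : Set ι} (hC : C.Countable)
    (hcover : ⋃ i ∈ C, U i = univ) : ∃ t : Finset ι, ⋃ i ∈ t, U i = univ := by
  obtain ⟨S, -, hS, hScover⟩ := exists_subset_image_finite_and.1 <|
    hinit (U '' C) (forall_mem_image.2 fun i _ => hU i) (by rwa [sUnion_image])
      ((le_aleph0_iff_set_countable.2 (hC.image U)).trans (aleph0_le_aleph 1))
  exact ⟨hS.toFinset, by simpa using hScover⟩

/-- An initially `ω₁`-compact space of countable tightness has no free sequence of
length `ω₁`. -/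
theorem exists_not_disjoint_closure (hinit : InitiallyOmega1Compact X)
    (ht : CountableTightness X) {I : Type} [LinearOrder I] (hI : #I = aleph 1)
    (hc : ∀ a : I, (Iio a).Countable) (x : I → X) :
    ∃ a, ¬ Disjoint (closure (x '' Iio a)) (closure (x '' Ici a)) := by
  have : Nonempty I := by
    rw [← mk_ne_zero_iff, hI]
    exact (aleph_pos 1).ne'
  obtain ⟨p, hp⟩ : ∃ p, ∀ a, p ∈ closure (x '' Ici a) := by
    by_contra! h
    have hcard : #(range fun a => (closure (x '' Ici a))ᶜ) ≤ aleph 1 := by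
      simpa [hI] using mk_range_le_lift (f := fun a => (closure (x '' Ici a))ᶜ)
    obtain ⟨V, hV, hVfin, hVcover⟩ := hinit (range fun a => (closure (x '' Ici a))ᶜ)
      (forall_mem_range.2 fun a => isClosed_closure.isOpen_compl)
      (eq_univ_of_forall fun p => by
        obtain ⟨a, ha⟩ := h p
        exact ⟨_, mem_range_self a, ha⟩) hcard
    have hV' : ∀ w ∈ V, ∃ a, (closure (x '' Ici a))ᶜ = w := fun _ hw => hV hw
    choose! g hg using hV'
    obtain ⟨b, hb⟩ := exists_subset_Iio_of_countable hI hc (hVfin.image g).countable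
    obtain ⟨w, hw, hxw⟩ : x b ∈ ⋃₀ V := hVcover ▸ mem_univ _
    rw [← hg w hw] at hxw
    exact hxw (subset_closure (mem_image_of_mem x (hb (mem_image_of_mem g hw)).le))
  obtain ⟨B, hB, hBc, hpB⟩ := ht (range x) p
    (closure_mono (image_subset_range _ _) (hp (Classical.arbitrary I)))
  have hB' : ∀ y ∈ B, ∃ a, x a = y := fun _ hy => hB hy
  choose! g hg using hB'
  obtain ⟨a, ha⟩ := exists_subset_Iio_of_countable hI hc (hBc.image g)
  refine ⟨a, not_disjoint_iff.2 ⟨p, closure_mono (fun y hy => ?_) hpB, hp a⟩⟩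
  exact ⟨g y, ha (mem_image_of_mem g hy), hg y hy⟩

end InitiallyOmega1Compact

/-- Well-founded recursion: a sequence each of whose terms avoids the open sets attached to the
ranges of the initial segments up to it. -/
theorem exists_seq_avoiding {X ι I : Type*} [LinearOrder I] [WellFoundedLT I]
    (hc : ∀ a : I, (Iio a).Countable) (U : ι → Set X)
    (hU : ∀ C : Set ι, C.Countable → ∃ x, ∀ i ∈ C, x ∉ U i) (t : Set X → Finset ι) :
    ∃ x : I → X, ∀ a b, a ≤ b → ∀ i ∈ t (x '' Iio a), x b ∉ U i := by
  have : Nonempty X := (hU ∅ countable_empty).nonempty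
  choose! pick hpick using hU
  let F : ∀ b : I, (∀ a, a < b → X) → X := fun b prev =>
    pick (⋃ a : Iic b, t (range fun c : Iio a.1 => prev c.1 (c.2.trans_le a.2)))
  let x : I → X := wellFounded_lt.fix F
  have hx : ∀ b, x b = pick (⋃ a : Iic b, t (x '' Iio a.1)) := by
    intro b
    simp only [image_eq_range]
    exact wellFounded_lt.fix_eq F b
  refine ⟨x, fun a b hab i hi => ?_⟩
  rw [hx b]
  have hb : (Iic b).Countable := by
    rw [← Iio_insert]
    exact (hc b).insert b
  have := hb.to_subtype
  exact hpick _ (countable_iUnion fun a => (t _).countable_toSet) i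
    (mem_iUnion.2 ⟨⟨a, hab⟩, hi⟩)

theorem stmt9 (hCH : Cardinal.continuum = Cardinal.aleph 1)
    {X : Type*} [TopologicalSpace X] [T3Space X]
    (hinit : InitiallyOmega1Compact X) (ht : CountableTightness X) :
    IsCompact (Set.univ : Set X) := by
  refine isCompact_of_finite_subcover fun {ι} U hU hcover => ?_
  by_contra! hfin
  have havoid : ∀ C : Set ι, C.Countable → ∃ x, ∀ i ∈ C, x ∉ U i := by
    intro C hC
    by_contra! h
    obtain ⟨s, hs⟩ := hinit.exists_finset_cover_of_countable hU hC
      (eq_univ_of_forall fun x => by simpa using h x)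
    exact hfin s hs.ge
  have hcpt : ∀ D : Set X, D.Countable → ∃ s : Finset ι, closure D ⊆ ⋃ i ∈ s, U i :=
    fun D hD => (hinit.isCompact_closure_of_countable
      (continuum_eq_aleph_one_transfer hCH) hD).elim_finite_subcover U hU
        ((subset_univ _).trans hcover)
  choose! t htD using hcpt
  obtain ⟨I, _, _, hI, hc⟩ := exists_wellOrder_countable_Iio
  obtain ⟨x, hx⟩ := exists_seq_avoiding hc U havoid t
  obtain ⟨a, ha⟩ := hinit.exists_not_disjoint_closure ht hI hc x
  refine ha (Disjoint.mono_left (htD _ ((hc a).image x)) ?_)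
  refine Disjoint.closure_right ?_ (isOpen_biUnion fun i _ => hU i)
  rw [disjoint_right]
  rintro _ ⟨b, hb, rfl⟩ hmem
  obtain ⟨i, hi, hxi⟩ := mem_iUnion₂.1 hmem
  exact hx a b hb i hi hxi
end
end

section
/- Let f : [ω₂]² → [ω₂]^{≤ω} satisfy f{α,β} ⊆ α ∩ β for all pairs, and let P_f be the associated poset of finite conditions. Then for each α < ω₂ the set D_α = {p ∈ P_f : α ∈ a^p} is dense in P_f, i.e. every q ∈ P_f has an extension p ≤ q with α ∈ a^p. -/
attribute [local instance] Classical.propDecidable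

noncomputable section

/-- The operation `x * y` on nonempty finite sets of ordinals with `max x ≠ max y`:
`x \ y` if `max x ∈ y`, `y \ x` if `max y ∈ x`, and `x ∩ y` otherwise. -/
def ostar (x y : Finset Ordinal) : Finset Ordinal :=
  if ∃ m ∈ y, x.max = (m : WithBot Ordinal) then x \ y
  else if ∃ m ∈ x, y.max = (m : WithBot Ordinal) then y \ x
  else x ∩ y

/-- The conditions of the poset `P_f`: triples `(a, h, i)` where `a` is a finite
subset of ω₂, `h : a → 𝒫(a)` with `max (h ξ) = ξ`, `i : [a]² → 𝒫(a)` with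
`i {ξ,η} ⊆ f {ξ,η}`, and `h ξ * h η ⊆ ⋃ {h ν : ν ∈ i {ξ,η}}`. -/
structure PfCond (f : Ordinal → Ordinal → Set Ordinal) where
  a : Finset Ordinal
  h : Ordinal → Finset Ordinal
  i : Ordinal → Ordinal → Finset Ordinal
  a_lt : ∀ ξ ∈ a, ξ < omega2
  h_sub : ∀ ξ ∈ a, h ξ ⊆ a
  h_mem : ∀ ξ ∈ a, ξ ∈ h ξ
  h_le : ∀ ξ ∈ a, ∀ η ∈ h ξ, η ≤ ξ
  i_symm : ∀ ξ η, i ξ η = i η ξ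
  i_sub_f : ∀ ξ ∈ a, ∀ η ∈ a, ξ ≠ η → ∀ ν ∈ i ξ η, ν ∈ f ξ η
  i_sub_a : ∀ ξ ∈ a, ∀ η ∈ a, ξ ≠ η → i ξ η ⊆ a
  star_cond : ∀ ξ ∈ a, ∀ η ∈ a, ξ ≠ η → ostar (h ξ) (h η) ⊆ (i ξ η).biUnion h

/-- The order on `P_f`: `p ≤ q` iff `a^p ⊇ a^q`, `h^p(ξ) ∩ a^q = h^q(ξ)` for
`ξ ∈ a^q`, and `i^p` extends `i^q`. -/
def PfLe {f : Ordinal → Ordinal → Set Ordinal} (p q : PfCond f) : Prop :=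
  q.a ⊆ p.a ∧ (∀ ξ ∈ q.a, p.h ξ ∩ q.a = q.h ξ) ∧
    ∀ ξ ∈ q.a, ∀ η ∈ q.a, ξ ≠ η → p.i ξ η = q.i ξ η

theorem ostar_singleton_left {α : Ordinal} {y : Finset Ordinal} (hy : α ∉ y) :
    ostar {α} y = ∅ := by
  unfold ostar
  rw [if_neg, if_neg, Finset.singleton_inter_of_notMem hy]
  · rintro ⟨m, hm, hmax⟩
    rw [Finset.mem_singleton.1 hm] at hmax
    exact hy (Finset.mem_of_max hmax)
  · rintro ⟨m, hm, hmax⟩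
    rw [Finset.max_singleton, WithBot.coe_inj] at hmax
    exact hy (hmax ▸ hm)

theorem ostar_singleton_right {α : Ordinal} {y : Finset Ordinal} (hy : α ∉ y) :
    ostar y {α} = ∅ := by
  unfold ostar
  rw [if_neg, if_neg, Finset.inter_singleton_of_notMem hy]
  · rintro ⟨m, hm, hmax⟩
    rw [Finset.max_singleton, WithBot.coe_inj] at hmax
    exact hy (hmax ▸ hm)
  · rintro ⟨m, hm, hmax⟩
    rw [Finset.mem_singleton.1 hm] at hmax
    exact hy (Finset.mem_of_max hmax)

/-- Adjoin a new ordinal `α` to a condition, with `h α = {α}` and `i {α, ξ} = ∅`. -/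
def PfCond.adjoin {f : Ordinal → Ordinal → Set Ordinal} (q : PfCond f) (α : Ordinal)
    (hα : α < omega2) (hαq : α ∉ q.a) : PfCond f where
  a := insert α q.a
  h ξ := if ξ = α then {α} else q.h ξ
  i ξ η := if ξ = α ∨ η = α then ∅ else q.i ξ η
  a_lt ξ hξ := by
    rcases Finset.mem_insert.1 hξ with rfl | hξ
    exacts [hα, q.a_lt ξ hξ]
  h_sub ξ hξ := by
    have := q.h_sub ξ
    grind
  h_mem ξ hξ := by
    have := q.h_mem ξ
    grind
  h_le ξ hξ η hη := by
    have := q.h_le ξ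
    grind
  i_symm ξ η := by
    simp only [or_comm]
    rw [q.i_symm η ξ]
  i_sub_f ξ hξ η hη hne ν hν := by
    have := q.i_sub_f ξ
    grind
  i_sub_a ξ hξ η hη hne := by
    have := q.i_sub_a ξ
    grind
  star_cond ξ hξ η hη hne := by
    have notMem_h : ∀ ζ ∈ q.a, α ∉ q.h ζ := fun ζ hζ h => hαq (q.h_sub ζ hζ h)
    rcases Finset.mem_insert.1 hξ with rfl | hξ'
    · have hη' := Finset.mem_of_mem_insert_of_ne hη hne.symm
      simp [hne.symm, ostar_singleton_left (notMem_h η hη')]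
    rcases Finset.mem_insert.1 hη with rfl | hη'
    · simp [hne, ostar_singleton_right (notMem_h ξ hξ')]
    have hξα : ξ ≠ α := ne_of_mem_of_not_mem hξ' hαq
    have hηα : η ≠ α := ne_of_mem_of_not_mem hη' hαq
    simp only [hξα, hηα, or_self, if_false]
    refine (q.star_cond ξ hξ' η hη' hne).trans fun x hx => ?_
    obtain ⟨ν, hν, hxν⟩ := Finset.mem_biUnion.1 hx
    have hνα : ν ≠ α := ne_of_mem_of_not_mem (q.i_sub_a ξ hξ' η hη' hne hν) hαq
    exact Finset.mem_biUnion.2 ⟨ν, hν, by rwa [if_neg hνα]⟩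

theorem PfCond.adjoin_le {f : Ordinal → Ordinal → Set Ordinal} (q : PfCond f) (α : Ordinal)
    (hα : α < omega2) (hαq : α ∉ q.a) : PfLe (q.adjoin α hα hαq) q := by
  refine ⟨Finset.subset_insert _ _, fun ξ hξ => ?_, fun ξ hξ η hη _ => ?_⟩
  · simp only [adjoin, if_neg (ne_of_mem_of_not_mem hξ hαq)]
    exact Finset.inter_eq_left.2 (q.h_sub ξ hξ)
  · simp [adjoin, ne_of_mem_of_not_mem hξ hαq, ne_of_mem_of_not_mem hη hαq]

theorem stmt10
    (f : Ordinal → Ordinal → Set Ordinal)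
    (hsymm : ∀ α β, f α β = f β α)
    (hlt : ∀ α β γ, γ ∈ f α β → γ < α ∧ γ < β)
    (hcount : ∀ α β, (f α β).Countable)
    (α : Ordinal) (hα : α < omega2) (q : PfCond f) :
    ∃ p : PfCond f, PfLe p q ∧ α ∈ p.a := by
  by_cases hαq : α ∈ q.a
  · exact ⟨q, ⟨subset_rfl, fun ξ hξ => Finset.inter_eq_left.2 (q.h_sub ξ hξ),
      fun _ _ _ _ _ => rfl⟩, hαq⟩
  · exact ⟨q.adjoin α hα hαq, q.adjoin_le α hα hαq, Finset.mem_insert_self _ _⟩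
end
end

section
/- Let f : [ω₂]² → [ω₂]^{≤ω} satisfy f{α,β} ⊆ α ∩ β for all pairs. If p ∈ P_f, β ∈ a^p, b ⊆ a^p ∩ β, and α ∈ β \ a^p, then there is a condition q ∈ P_f with q ≤ p such that α ∈ h^q(β) \ ⋃{h^q(ν) : ν ∈ b}. -/
attribute [local instance] Classical.propDecidable

noncomputable section

theorem IsGreatest.finset_max_eq {ι : Type*} [LinearOrder ι] {z : Finset ι} {ζ : ι}
    (hz : IsGreatest (z : Set ι) ζ) : z.max = (ζ : WithBot ι) :=
  le_antisymm (Finset.max_le fun _ h => WithBot.coe_le_coe.2 (hz.2 h)) (Finset.le_max hz.1)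

theorem ostar_eq_of_isGreatest {x y : Finset Ordinal} {ξ η : Ordinal}
    (hx : IsGreatest (x : Set Ordinal) ξ) (hy : IsGreatest (y : Set Ordinal) η) :
    ostar x y = if ξ ∈ y then x \ y else if η ∈ x then y \ x else x ∩ y := by
  simp only [ostar, hx.finset_max_eq, hy.finset_max_eq, WithBot.coe_inj, exists_eq_right']

theorem PfCond.isGreatest_h {f : Ordinal → Ordinal → Set Ordinal} (p : PfCond f) {ξ : Ordinal}
    (hξ : ξ ∈ p.a) : IsGreatest (p.h ξ : Set Ordinal) ξ :=
  ⟨p.h_mem ξ hξ, p.h_le ξ hξ⟩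

/-- Adjoin `α` to those sets of the family `h` that contain `β`, and put `h α = {α}`. -/
def twinH (h : Ordinal → Finset Ordinal) (α β ξ : Ordinal) : Finset Ordinal :=
  if ξ = α then {α} else if β ∈ h ξ then insert α (h ξ) else h ξ

theorem twinH_self (h : Ordinal → Finset Ordinal) (α β : Ordinal) : twinH h α β α = {α} := by
  simp [twinH]

theorem mem_twinH {h : Ordinal → Finset Ordinal} {α β ξ γ : Ordinal} (hξ : ξ ≠ α) :
    γ ∈ twinH h α β ξ ↔ γ ∈ h ξ ∨ (γ = α ∧ β ∈ h ξ) := by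
  unfold twinH
  split_ifs <;> simp_all [or_comm]

theorem isGreatest_twinH {f : Ordinal → Ordinal → Set Ordinal} (p : PfCond f) {α β ξ : Ordinal}
    (hαβ : α < β) (hξ : ξ ∈ insert α p.a) :
    IsGreatest (twinH p.h α β ξ : Set Ordinal) ξ := by
  by_cases h : ξ = α
  · subst h
    simp [twinH_self]
  · have hξa := Finset.mem_of_mem_insert_of_ne hξ h
    refine ⟨(mem_twinH h).2 (.inl (p.h_mem ξ hξa)), fun γ hγ => ?_⟩
    rcases (mem_twinH h).1 hγ with hγ | ⟨rfl, hβ⟩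
    · exact p.h_le ξ hξa γ hγ
    · exact hαβ.le.trans (p.h_le ξ hξa β hβ)

/-- The condition obtained from `p` by adding a new point `α` below `β` that belongs to exactly
those `h ξ` with `ξ ∈ a` which contain `β`. -/
def PfCond.addTwin {f : Ordinal → Ordinal → Set Ordinal} (p : PfCond f) (α β : Ordinal)
    (hβ : β ∈ p.a) (hαβ : α < β) (hαa : α ∉ p.a) : PfCond f where
  a := insert α p.a
  h := twinH p.h α β
  i ξ η := if ξ = α ∨ η = α then ∅ else p.i ξ η
  a_lt ξ hξ := by
    rcases Finset.mem_insert.1 hξ with rfl | hξ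
    · exact hαβ.trans (p.a_lt β hβ)
    · exact p.a_lt ξ hξ
  h_sub ξ hξ γ hγ := by
    by_cases h : ξ = α
    · subst h
      simp_all [twinH_self]
    · have hξa := Finset.mem_of_mem_insert_of_ne hξ h
      rcases (mem_twinH h).1 hγ with hγ | ⟨rfl, -⟩
      · exact Finset.mem_insert_of_mem (p.h_sub ξ hξa hγ)
      · exact Finset.mem_insert_self _ _
  h_mem ξ hξ := (isGreatest_twinH p hαβ hξ).1
  h_le ξ hξ _ hη := (isGreatest_twinH p hαβ hξ).2 hη
  i_symm ξ η := by
    rw [p.i_symm ξ η]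
    simp only [or_comm]
  i_sub_f ξ hξ η hη hne ν hν := by
    split_ifs at hν with h
    · simp at hν
    · push Not at h
      exact p.i_sub_f ξ (Finset.mem_of_mem_insert_of_ne hξ h.1)
        η (Finset.mem_of_mem_insert_of_ne hη h.2) hne ν hν
  i_sub_a ξ hξ η hη hne ν hν := by
    split_ifs at hν with h
    · simp at hν
    · push Not at h
      exact Finset.mem_insert_of_mem (p.i_sub_a ξ (Finset.mem_of_mem_insert_of_ne hξ h.1)
        η (Finset.mem_of_mem_insert_of_ne hη h.2) hne hν)
  star_cond ξ hξ η hη hne γ hγ := by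
    rw [ostar_eq_of_isGreatest (isGreatest_twinH p hαβ hξ) (isGreatest_twinH p hαβ hη)] at hγ
    by_cases hξα : ξ = α
    · subst hξα
      simp only [twinH_self] at hγ
      split_ifs at hγ <;> aesop
    by_cases hηα : η = α
    · subst hηα
      simp only [twinH_self] at hγ
      split_ifs at hγ <;> aesop
    have hξa := Finset.mem_of_mem_insert_of_ne hξ hξα
    have hηa := Finset.mem_of_mem_insert_of_ne hη hηα
    have hαξ : α ∉ p.h ξ := fun h => hαa (p.h_sub ξ hξa h)
    have hαη : α ∉ p.h η := fun h => hαa (p.h_sub η hηa h)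
    have key : ∀ δ ∈ ostar (p.h ξ) (p.h η), ∃ ν ∈ p.i ξ η, ν ≠ α ∧ δ ∈ p.h ν := fun δ hδ => by
      obtain ⟨ν, hν, hδν⟩ := Finset.mem_biUnion.1 (p.star_cond ξ hξa η hηa hne hδ)
      exact ⟨ν, hν, fun h => hαa (h ▸ p.i_sub_a ξ hξa η hηa hne hν), hδν⟩
    rw [ostar_eq_of_isGreatest (p.isGreatest_h hξa) (p.isGreatest_h hηa)] at key
    simp only [mem_twinH hξα, mem_twinH hηα, hξα, hηα, false_and, or_false] at hγ
    simp only [hξα, hηα, or_self, if_false, Finset.mem_biUnion]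
    by_cases hγα : γ = α
    · subst hγα
      obtain ⟨ν, hν, hνα, hβν⟩ := key β (by
        split_ifs at hγ ⊢ <;> simp_all [mem_twinH hξα, mem_twinH hηα])
      exact ⟨ν, hν, (mem_twinH hνα).2 (.inr ⟨rfl, hβν⟩)⟩
    · obtain ⟨ν, hν, hνα, hγν⟩ := key γ (by
        split_ifs at hγ ⊢ <;> simp_all [mem_twinH hξα, mem_twinH hηα])
      exact ⟨ν, hν, (mem_twinH hνα).2 (.inl hγν)⟩

theorem PfCond.addTwin_le {f : Ordinal → Ordinal → Set Ordinal} (p : PfCond f) {α β : Ordinal}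
    (hβ : β ∈ p.a) (hαβ : α < β) (hαa : α ∉ p.a) : PfLe (p.addTwin α β hβ hαβ hαa) p := by
  have ne : ∀ {ξ}, ξ ∈ p.a → ξ ≠ α := fun hξ h => hαa (h ▸ hξ)
  refine ⟨Finset.subset_insert _ _, fun ξ hξ => ?_, fun ξ hξ η hη _ => ?_⟩
  · ext γ
    simp only [addTwin, Finset.mem_inter, mem_twinH (ne hξ)]
    constructor
    · rintro ⟨hγ | ⟨rfl, -⟩, hγa⟩
      · exact hγ
      · exact absurd hγa hαa
    · exact fun hγ => ⟨.inl hγ, p.h_sub ξ hξ hγ⟩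
  · simp [addTwin, ne hξ, ne hη]

theorem stmt15
    (f : Ordinal → Ordinal → Set Ordinal)
    (hsymm : ∀ α β, f α β = f β α)
    (hlt : ∀ α β γ, γ ∈ f α β → γ < α ∧ γ < β)
    (hcount : ∀ α β, (f α β).Countable)
    (p : PfCond f) (β : Ordinal) (hβ : β ∈ p.a)
    (b : Finset Ordinal) (hb : ∀ ν ∈ b, ν ∈ p.a ∧ ν < β)
    (α : Ordinal) (hαβ : α < β) (hαa : α ∉ p.a) :
    ∃ q : PfCond f, PfLe q p ∧ α ∈ q.h β ∧ α ∉ b.biUnion q.h := by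
  refine ⟨p.addTwin α β hβ hαβ hαa, p.addTwin_le hβ hαβ hαa,
    (mem_twinH hαβ.ne').2 (.inr ⟨rfl, p.h_mem β hβ⟩), fun h => ?_⟩
  obtain ⟨ν, hν, hαν⟩ := Finset.mem_biUnion.1 h
  obtain ⟨hνa, hνβ⟩ := hb ν hν
  rcases (mem_twinH (ne_of_mem_of_not_mem hνa hαa)).1 hαν with h | ⟨-, h⟩
  · exact hαa (p.h_sub ν hνa h)
  · exact hνβ.not_ge (p.h_le ν hνa β h)
end
end
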